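/- arXiv:2001.04644 — 2 statements merged into one kernel-verified Lean document; each statement's English description precedes it below -/
import Mathlib

section
/- Let G be a sequential hierarchy on N all of whose strongly connected components are complete connected components, and let (γ,H,c) be utility parameters satisfying: (A) for every i ∈ N with ℓ := ℓ_i(C(G)) ≥ 1, H(ℓ) − H(ℓ−1) > γ + c·(|P_i(G)| + L_ℓ(G)) / (|P_i(G)|·(|P_i(G)| + 1)); and (B) for every critical edge ij, ji ∈ G with ℓ := ℓ_i(C(G)), H(ℓ+1) − H(ℓ) < γ + c·(1 + L_ℓ(G)/2). Then G is an equilibrium network for non-consensual agents with parameters (γ,H,c). -/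
/-!
In a sequential hierarchy with complete components, `(a, b)` is an edge exactly when `a ≠ b` and
`level a ≤ level b` (`mem_iff_level_le`), so the digraph is determined by its level function and
every neighbourhood and every set `P_i(G,k)` can be written down explicitly. The subordinates of `i`
are the `L` nodes of lower level, and `P_i(G,k)` is always the component of `i`, of size `s`, so the
cost of `i` is `c * L / s`.

The change of level caused by toggling one edge only has to be bounded from above, since `H` is
increasing. This is done by `level_le_of_potential`: a function that is weakly increasing along edges
and strictly increasing along edges between different components dominates the level.

* Deleting an edge to a higher level costs `γ` and changes nothing else (`erase_up_lt`).
* Deleting an edge inside the component turns the cost into `c * (L + 1) / (s - 1)`. If `s ≥ 3` the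
  level does not rise. If `s = 2` the edge is critical, the level rises by at most one, and
  condition (B) is exactly what is needed (`erase_same_lt`).
* Adding an edge `ij` to a lower level merges all levels between those of `j` and `i`, so the level
  of `i` drops by at least one. The gain is `γ` plus a cost reduction of at most
  `c * (L / s - (L - 1) / (s + 1)) = c * (s + L) / (s * (s + 1))`, which is beaten by condition (A)
  (`insert_down_lt`).
-/

open Finset MeasureTheory ProbabilityTheory

attribute [local instance 10] Classical.propDecidable

noncomputable section

/-- A digraph on the agent set `Fin n`: a finite set of ordered pairs (directed edges). -/
abbrev Network (n : ℕ) := Finset (Fin n × Fin n)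

variable {n : ℕ}

/-- Edges only join distinct nodes. -/
def validNetwork (G : Network n) : Prop := ∀ p ∈ G, p.1 ≠ p.2

/-- Out-neighborhood `N_out(i,G)`. -/
def Nout (G : Network n) (i : Fin n) : Finset (Fin n) := univ.filter fun j => (i, j) ∈ G

/-- The set of subordinates `N_in^s(i,G)`. -/
def NinS (G : Network n) (i : Fin n) : Finset (Fin n) :=
  univ.filter fun j => (j, i) ∈ G ∧ (i, j) ∉ G

/-- `P_i(G,k) = {i} ∪ {j : kj ∈ G and ij, ji ∈ G}`. -/
def Pset (G : Network n) (i k : Fin n) : Finset (Fin n) :=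
  insert i (univ.filter fun j => (k, j) ∈ G ∧ (i, j) ∈ G ∧ (j, i) ∈ G)

/-- `P_i(G) = ⋂_{k ∈ N_in^s(i,G)} P_i(G,k)`. -/
def Pall (G : Network n) (i : Fin n) : Finset (Fin n) :=
  univ.filter fun j => ∀ k ∈ NinS G i, j ∈ Pset G i k

/-- Reachability along directed edges. -/
def reach (G : Network n) : Fin n → Fin n → Prop :=
  Relation.ReflTransGen fun a b => (a, b) ∈ G

/-- `i` and `j` belong to the same strongly connected component. -/
def sameSCC (G : Network n) (i j : Fin n) : Prop := reach G i j ∧ reach G j i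

/-- The strongly connected component `Γ(i,G)` of `i`. -/
def sccSet (G : Network n) (i : Fin n) : Finset (Fin n) := univ.filter fun j => sameSCC G i j

/-- An arc of the condensation `C(G)`, between the SCC of `a` and the SCC of `b`. -/
def condArc (G : Network n) (a b : Fin n) : Prop :=
  ¬ sameSCC G a b ∧ ∃ a' b' : Fin n, sameSCC G a a' ∧ sameSCC G b b' ∧ (a', b') ∈ G

/-- The SCC of `a` is a source of the condensation `C(G)`. -/
def isSourceSCC (G : Network n) (a : Fin n) : Prop := ∀ b, ¬ condArc G b a

/-- The level `ℓ_i(C(G))`: the largest number of arcs on a directed path in the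
condensation `C(G)` from a source of `C(G)` to the SCC of `i`. -/
def level (G : Network n) (i : Fin n) : ℕ :=
  sSup {m : ℕ | ∃ f : ℕ → Fin n, isSourceSCC G (f 0) ∧ sameSCC G (f m) i ∧
    ∀ t, t < m → condArc G (f t) (f (t + 1))}

/-- The utility `u_i(G)` of agent `i` in the network `G`. -/
def utility (γ c : ℝ) (H : ℕ → ℝ) (G : Network n) (i : Fin n) : ℝ :=
  ((Nout G i).card : ℝ) * γ + H (level G i)
    - c * ∑ k ∈ NinS G i, (1 : ℝ) / ((Pset G i k).card : ℝ)

/-- Utility parameters: `γ > 0`, `c > 0`, `H` strictly increasing with `H 0 ≥ 0`. -/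
def UtilityParams (γ c : ℝ) (H : ℕ → ℝ) : Prop :=
  0 < γ ∧ 0 < c ∧ StrictMono H ∧ 0 ≤ H 0

/-- Equilibrium network for non-consensual agents. -/
def eqNonConsensual (γ c : ℝ) (H : ℕ → ℝ) (G : Network n) : Prop :=
  ∀ i j : Fin n, i ≠ j →
    ((i, j) ∈ G → utility γ c H (G.erase (i, j)) i < utility γ c H G i) ∧
    ((i, j) ∉ G → utility γ c H (insert (i, j) G) i < utility γ c H G i)

/-- Equilibrium network for consensual agents. -/
def eqConsensual (γ c : ℝ) (H : ℕ → ℝ) (G : Network n) : Prop :=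
  ∀ i j : Fin n, i ≠ j →
    ((i, j) ∈ G → utility γ c H (G.erase (i, j)) i < utility γ c H G i) ∧
    ((i, j) ∉ G →
      utility γ c H (insert (i, j) G) i < utility γ c H G i ∨
        (utility γ c H G i ≤ utility γ c H (insert (i, j) G) i ∧
          utility γ c H (insert (i, j) G) j < utility γ c H G j))

/-- `G` has no directed cycles: every edge joining two nodes of the same SCC
is an undirected edge. -/
def noDirectedCycles (G : Network n) : Prop :=
  ∀ i j : Fin n, (i, j) ∈ G → sameSCC G i j → (j, i) ∈ G

/-- Reachability forgetting edge directions. -/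
def weakReach (G : Network n) : Fin n → Fin n → Prop :=
  Relation.ReflTransGen fun a b => (a, b) ∈ G ∨ (b, a) ∈ G

/-- `G` is weakly connected. -/
def weaklyConnected (G : Network n) : Prop := ∀ i j : Fin n, weakReach G i j

/-- Every SCC of `G` is a complete connected component: any two distinct nodes of
the same SCC are joined by an undirected edge. -/
def completeSCCs (G : Network n) : Prop :=
  ∀ i j : Fin n, i ≠ j → sameSCC G i j → (i, j) ∈ G ∧ (j, i) ∈ G

/-- The undirected edge `ij, ji ∈ G` is critical: `Γ(i,G) ≠ Γ(i, G - ij)`. -/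
def criticalEdge (G : Network n) (i j : Fin n) : Prop :=
  (i, j) ∈ G ∧ (j, i) ∈ G ∧
    {k : Fin n | sameSCC G i k} ≠ {k : Fin n | sameSCC (G.erase (i, j)) i k}

/-- `L_ℓ(G) = |{j : ℓ_j(C(G)) < ℓ}|`. -/
def Lcard (G : Network n) (ℓ : ℕ) : ℕ :=
  (univ.filter fun j : Fin n => level G j < ℓ).card

/-- `G` is a sequential hierarchy: weakly connected, no directed cycles, exactly one
SCC per level, and (if more than one level) every node has a single edge towards
every node of strictly higher level. -/
def seqHierarchy (G : Network n) : Prop :=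
  weaklyConnected G ∧ noDirectedCycles G ∧
  (∀ i j : Fin n, level G i = level G j → sameSCC G i j) ∧
  ((∃ i j : Fin n, level G i ≠ level G j) →
    ∀ i j : Fin n, level G i < level G j → (i, j) ∈ G ∧ (j, i) ∉ G)

/-- The better-response update of `G` at the ordered pair `p = (i,j)`. -/
def brUpdate (consensual : Bool) (γ c : ℝ) (H : ℕ → ℝ) (G : Network n)
    (p : Fin n × Fin n) : Network n :=
  if p ∈ G then
    if utility γ c H G p.1 ≤ utility γ c H (G.erase p) p.1 then G.erase p else G
  else if consensual then
    if utility γ c H G p.1 ≤ utility γ c H (insert p G) p.1 ∧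
        utility γ c H G p.2 ≤ utility γ c H (insert p G) p.2 then insert p G else G
  else
    if utility γ c H G p.1 ≤ utility γ c H (insert p G) p.1 then insert p G else G

/-- Equilibrium network for the given agent type. -/
def equilibrium (consensual : Bool) (γ c : ℝ) (H : ℕ → ℝ) (G : Network n) : Prop :=
  if consensual then eqConsensual γ c H G else eqNonConsensual γ c H G


/-! ### Bounding levels by potentials -/

theorem potential_le_of_reach {G : Network n} {φ : Fin n → ℕ}
    (hmono : ∀ a b, (a, b) ∈ G → φ a ≤ φ b) {a b : Fin n} (h : reach G a b) : φ a ≤ φ b := by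
  induction h with
  | refl => exact le_rfl
  | tail _ h ih => exact ih.trans (hmono _ _ h)

theorem potential_eq_of_sameSCC {G : Network n} {φ : Fin n → ℕ}
    (hmono : ∀ a b, (a, b) ∈ G → φ a ≤ φ b) {a b : Fin n} (h : sameSCC G a b) : φ a = φ b :=
  le_antisymm (potential_le_of_reach hmono h.1) (potential_le_of_reach hmono h.2)

theorem sameSCC_trans {G : Network n} {a b d : Fin n} (h : sameSCC G a b) (h' : sameSCC G b d) :
    sameSCC G a d := ⟨h.1.trans h'.1, h'.2.trans h.2⟩

theorem sameSCC_symm {G : Network n} {a b : Fin n} (h : sameSCC G a b) : sameSCC G b a :=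
  ⟨h.2, h.1⟩

/-- A function that is weakly increasing along edges, and along an edge is constant only inside a
strongly connected component, is an upper bound for the level. -/
theorem level_le_of_potential {G : Network n} {φ : Fin n → ℕ}
    (hmono : ∀ a b, (a, b) ∈ G → φ a ≤ φ b)
    (hstrict : ∀ a b, (a, b) ∈ G → φ a = φ b → sameSCC G a b) (i : Fin n) :
    level G i ≤ φ i := by
  unfold level
  apply csSup_le'
  rintro m ⟨f, -, hm, harc⟩
  rw [← potential_eq_of_sameSCC hmono hm]
  have key : ∀ t, t ≤ m → t ≤ φ (f t) := by
    intro t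
    induction t with
    | zero => intro _; exact Nat.zero_le _
    | succ t ih =>
      intro ht
      obtain ⟨hne, a, b, ha, hb, hab⟩ := harc t ht
      have h1 := ih (by omega)
      have h2 := hmono a b hab
      have h3 := potential_eq_of_sameSCC hmono ha
      have h4 := potential_eq_of_sameSCC hmono hb
      have h5 : φ a ≠ φ b := fun h =>
        hne (sameSCC_trans (sameSCC_trans ha (hstrict a b hab h)) (sameSCC_symm hb))
      omega
  exact key m le_rfl

/-! ### Neighbourhoods and costs in terms of levels -/

/-- The edges of a sequential hierarchy with complete components, in terms of levels. -/
theorem mem_iff_level_le {G : Network n} (hG : validNetwork G) (hsh : seqHierarchy G)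
    (hcomp : completeSCCs G) (a b : Fin n) : (a, b) ∈ G ↔ a ≠ b ∧ level G a ≤ level G b := by
  obtain ⟨-, -, h1, h2⟩ := hsh
  constructor
  · intro h
    refine ⟨hG _ h, ?_⟩
    by_contra! hlt
    exact (h2 ⟨b, a, hlt.ne⟩ b a hlt).2 h
  · rintro ⟨hne, hle⟩
    rcases hle.lt_or_eq with h | h
    · exact (h2 ⟨a, b, h.ne⟩ a b h).1
    · exact (hcomp a b hne (h1 a b h)).1

/-- The nodes on the same level as `i`; for the digraphs considered here, the component of `i`. -/
def peers (G : Network n) (i : Fin n) : Finset (Fin n) :=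
  univ.filter fun x => level G x = level G i

theorem NinS_eq {G : Network n} (hE : ∀ a b, (a, b) ∈ G ↔ a ≠ b ∧ level G a ≤ level G b)
    (i : Fin n) : NinS G i = univ.filter fun x => level G x < level G i := by
  ext x
  simp only [NinS, mem_filter, mem_univ, true_and, hE]
  grind

theorem card_NinS {G : Network n} (hE : ∀ a b, (a, b) ∈ G ↔ a ≠ b ∧ level G a ≤ level G b)
    (i : Fin n) : (NinS G i).card = Lcard G (level G i) := by
  rw [NinS_eq hE, Lcard]

theorem Pset_eq {G : Network n} (hE : ∀ a b, (a, b) ∈ G ↔ a ≠ b ∧ level G a ≤ level G b)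
    {i k : Fin n} (hk : k ∈ NinS G i) : Pset G i k = peers G i := by
  rw [NinS_eq hE] at hk
  ext x
  simp only [mem_filter, mem_univ, true_and] at hk
  simp only [Pset, peers, mem_insert, mem_filter, mem_univ, true_and, hE]
  grind

/-- The cost term of `i` in `G` is `L / s`. -/
theorem cost_eq {G : Network n} (hE : ∀ a b, (a, b) ∈ G ↔ a ≠ b ∧ level G a ≤ level G b)
    (i : Fin n) : ∑ k ∈ NinS G i, (1 : ℝ) / ((Pset G i k).card : ℝ)
      = (Lcard G (level G i) : ℝ) / ((peers G i).card : ℝ) := by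
  rw [Finset.sum_congr rfl fun k hk => by rw [Pset_eq hE hk], Finset.sum_const, card_NinS hE,
    nsmul_eq_mul, mul_one_div]

theorem card_Nout_erase {G : Network n} {i j : Fin n} (h : (i, j) ∈ G) :
    ((Nout (G.erase (i, j)) i).card : ℝ) = ((Nout G i).card : ℝ) - 1 := by
  have hj : j ∈ Nout G i := by simpa [Nout] using h
  have : Nout (G.erase (i, j)) i = (Nout G i).erase j := by
    ext x
    simp [Nout]
  rw [this, ← Finset.card_erase_add_one hj]
  push_cast
  ring

theorem card_Nout_insert {G : Network n} {i j : Fin n} (h : (i, j) ∉ G) :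
    ((Nout (insert (i, j) G) i).card : ℝ) = ((Nout G i).card : ℝ) + 1 := by
  have hj : j ∉ Nout G i := by simpa [Nout] using h
  have : Nout (insert (i, j) G) i = insert j (Nout G i) := by
    ext x
    simp [Nout]
  rw [this, Finset.card_insert_of_notMem hj]
  push_cast
  ring

/-! ### Deleting and adding one edge -/

/-- Deleting an edge towards a strictly higher level is not profitable. -/
theorem erase_up_lt {G : Network n} (hE : ∀ a b, (a, b) ∈ G ↔ a ≠ b ∧ level G a ≤ level G b)
    {γ c : ℝ} {H : ℕ → ℝ} (hpar : UtilityParams γ c H) {i j : Fin n}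
    (hlt : level G i < level G j) :
    utility γ c H (G.erase (i, j)) i < utility γ c H G i := by
  obtain ⟨hγ, hc, hH, -⟩ := hpar
  have hij : (i, j) ∈ G := (hE i j).2 ⟨fun h => by simp [h] at hlt, hlt.le⟩
  have hlev : level (G.erase (i, j)) i ≤ level G i := by
    apply level_le_of_potential (φ := level G)
    · intro a b hab
      exact ((hE a b).1 (mem_of_mem_erase hab)).2
    · intro a b hab h
      refine ⟨.single hab, .single ?_⟩
      have := ((hE a b).1 (mem_of_mem_erase hab)).1
      simp only [mem_erase, Prod.mk.injEq, hE, ne_eq]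
      grind
  have hN : NinS (G.erase (i, j)) i = NinS G i := by
    ext x
    simp only [NinS, mem_filter, mem_univ, true_and, mem_erase, Prod.mk.injEq, hE, ne_eq]
    grind
  have hP : ∀ k ∈ NinS G i, Pset (G.erase (i, j)) i k = Pset G i k := by
    intro k hk
    ext x
    simp only [Pset, mem_insert, mem_filter, mem_univ, true_and, mem_erase, Prod.mk.injEq, hE,
      ne_eq]
    grind
  unfold utility
  rw [hN, Finset.sum_congr rfl fun k hk => by rw [hP k hk], card_Nout_erase hij]
  have := hH.monotone hlev
  linarith

/-- Deleting an edge to a node of the same level is not profitable. -/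
theorem erase_same_lt {G : Network n} (hE : ∀ a b, (a, b) ∈ G ↔ a ≠ b ∧ level G a ≤ level G b)
    {γ c : ℝ} {H : ℕ → ℝ} (hpar : UtilityParams γ c H)
    (hB : ∀ i j : Fin n, criticalEdge G i j →
      H (level G i + 1) - H (level G i)
        < γ + c * (1 + (Lcard G (level G i) : ℝ) / 2)) {i j : Fin n} (hne : i ≠ j)
    (heq : level G i = level G j) :
    utility γ c H (G.erase (i, j)) i < utility γ c H G i := by
  obtain ⟨hγ, hc, hH, -⟩ := hpar
  have hij : (i, j) ∈ G := (hE i j).2 ⟨hne, heq.le⟩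
  have hji : (j, i) ∈ G := (hE j i).2 ⟨hne.symm, heq.ge⟩
  have hN : NinS (G.erase (i, j)) i = insert j (NinS G i) := by
    ext x
    simp only [NinS, mem_insert, mem_filter, mem_univ, true_and, mem_erase, Prod.mk.injEq, hE,
      ne_eq]
    grind
  have hjN : j ∉ NinS G i := by simp [NinS, hij]
  have hP : ∀ k ∈ insert j (NinS G i), Pset (G.erase (i, j)) i k = (peers G i).erase j := by
    intro k hk
    rw [NinS_eq hE] at hk
    simp only [mem_insert, mem_filter, mem_univ, true_and] at hk
    ext x
    simp only [Pset, peers, mem_insert, mem_filter, mem_univ, true_and, mem_erase, Prod.mk.injEq,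
      hE, ne_eq]
    grind
  have hjS : j ∈ peers G i := by simp [peers, heq]
  have hs : (((peers G i).erase j).card : ℝ) + 1 = ((peers G i).card : ℝ) := by
    exact_mod_cast Finset.card_erase_add_one hjS
  have hcost : ∑ k ∈ NinS (G.erase (i, j)) i, (1 : ℝ) / ((Pset (G.erase (i, j)) i k).card : ℝ)
      = ((Lcard G (level G i) : ℝ) + 1) / (((peers G i).erase j).card : ℝ) := by
    rw [hN, Finset.sum_congr rfl fun k hk => by rw [hP k hk], Finset.sum_const,
      card_insert_of_notMem hjN, card_NinS hE, nsmul_eq_mul, mul_one_div]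
    push_cast
    rfl
  have hpos : (1 : ℝ) ≤ (((peers G i).erase j).card : ℝ) := by
    have : i ∈ (peers G i).erase j := by simp [peers, hne]
    exact_mod_cast Finset.card_pos.2 ⟨i, this⟩
  unfold utility
  rw [hcost, cost_eq hE, card_Nout_erase hij, ← hs]
  generalize hL : (Lcard G (level G i) : ℝ) = L at *
  have hL0 : 0 ≤ L := by rw [← hL]; positivity
  by_cases hthird : ∃ x ∈ peers G i, x ≠ i ∧ x ≠ j
  · -- A third peer keeps `i` and `j` strongly connected, so the level function is still a potential.
    obtain ⟨x, hx, hxi, hxj⟩ := hthird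
    simp only [peers, mem_filter, mem_univ, true_and] at hx
    have hlev : level (G.erase (i, j)) i ≤ level G i := by
      apply level_le_of_potential (φ := level G)
      · intro a b hab
        exact ((hE a b).1 (mem_of_mem_erase hab)).2
      · intro a b hab h
        refine ⟨.single hab, ?_⟩
        have hab' := ((hE a b).1 (mem_of_mem_erase hab)).1
        by_cases hba : b = i ∧ a = j
        · obtain ⟨rfl, rfl⟩ := hba
          refine (Relation.ReflTransGen.single (b := x) ?_).tail ?_ <;>
            simp only [mem_erase, Prod.mk.injEq, hE, ne_eq] <;> grind
        · refine .single ?_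
          simp only [mem_erase, Prod.mk.injEq, hE, ne_eq]
          grind
    have h1 := hH.monotone hlev
    have h2 : L / ((((peers G i).erase j).card : ℝ) + 1)
        ≤ (L + 1) / (((peers G i).erase j).card : ℝ) := by
      gcongr <;> linarith
    have h3 := mul_le_mul_of_nonneg_left h2 hc.le
    linarith
  · -- The component is `{i, j}`; without `ij`, node `i` sits one level above `j` and everything
    -- that was above both moves up by one.
    have hpeer : ∀ x, level G x = level G i → x = i ∨ x = j := by
      intro x hx
      by_contra! h
      exact hthird ⟨x, by simp [peers, hx], h⟩
    have hcard : (((peers G i).erase j).card : ℝ) = 1 := by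
      have : (peers G i).erase j = {i} := by
        ext x
        simp only [peers, mem_erase, mem_filter, mem_univ, true_and, mem_singleton]
        grind
      simp [this]
    let φ : Fin n → ℕ := fun a =>
      if level G a < level G i ∨ a = j then level G a else level G a + 1
    have hmono : ∀ a b, (a, b) ∈ G.erase (i, j) → φ a ≤ φ b := by
      intro a b hab
      simp only [mem_erase, Prod.mk.injEq, hE, ne_eq] at hab
      have := hpeer a
      simp only [φ]
      grind
    have hφi : φ i = level G i + 1 := by simp [φ, hne]
    have hφj : φ j = level G i := by simp [φ, heq]
    have hlev : level (G.erase (i, j)) i ≤ level G i + 1 := by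
      rw [← hφi]
      apply level_le_of_potential hmono
      intro a b hab h
      refine ⟨.single hab, .single ?_⟩
      simp only [mem_erase, Prod.mk.injEq, hE, ne_eq] at hab ⊢
      have := hpeer a
      have := hpeer b
      simp only [φ] at h
      grind
    have hcrit : criticalEdge G i j := by
      refine ⟨hij, hji, fun h => ?_⟩
      have hj : j ∈ {k | sameSCC G i k} := ⟨.single hij, .single hji⟩
      rw [h] at hj
      have := potential_eq_of_sameSCC hmono hj
      omega
    have h1 := hH.monotone hlev
    have h2 := hB i j hcrit
    rw [hL] at h2
    rw [hcard]
    norm_num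
    linarith

/-- Adding an edge towards a strictly lower level is not profitable. -/
theorem insert_down_lt {G : Network n}
    (hE : ∀ a b, (a, b) ∈ G ↔ a ≠ b ∧ level G a ≤ level G b)
    {γ c : ℝ} {H : ℕ → ℝ} (hpar : UtilityParams γ c H)
    (hA : ∀ i : Fin n, 1 ≤ level G i →
      γ + c * ((((Pall G i).card : ℝ) + (Lcard G (level G i) : ℝ)) /
          (((Pall G i).card : ℝ) * (((Pall G i).card : ℝ) + 1)))
        < H (level G i) - H (level G i - 1)) {i j : Fin n}
    (hlt : level G j < level G i) :
    utility γ c H (insert (i, j) G) i < utility γ c H G i := by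
  obtain ⟨hγ, hc, hH, -⟩ := hpar
  have hij : (i, j) ∉ G := fun h => absurd ((hE i j).1 h).2 (by omega)
  have hjN : j ∈ NinS G i := by rw [NinS_eq hE]; simpa using hlt
  have hPall : Pall G i = peers G i := by
    ext x
    simp only [Pall, mem_filter, mem_univ, true_and]
    refine ⟨fun h => Pset_eq hE hjN ▸ h j hjN, fun h k hk => ?_⟩
    rwa [Pset_eq hE hk]
  have hAi := hA i (by omega)
  rw [hPall] at hAi
  have hlev : level (insert (i, j) G) i ≤ level G i - 1 := by
    -- All levels from that of `j` to that of `i` collapse to the level of `j`.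
    let φ : Fin n → ℕ := fun a =>
      if level G j ≤ level G a ∧ level G a ≤ level G i then level G j else level G a
    have hφi : φ i ≤ level G i - 1 := by simp only [φ]; grind
    refine le_trans (level_le_of_potential (φ := φ) ?_ ?_ i) hφi
    · intro a b hab
      simp only [mem_insert, Prod.mk.injEq, hE] at hab
      simp only [φ]
      grind
    · intro a b hab h
      have hle : ∀ x y, level G x ≤ level G y → reach (insert (i, j) G) x y := by
        intro x y hxy
        by_cases hne : x = y
        · subst hne; exact .refl
        · exact .single (mem_insert_of_mem ((hE x y).2 ⟨hne, hxy⟩))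
      have hloop : reach (insert (i, j) G) i j := .single (mem_insert_self _ _)
      refine ⟨.single hab, ?_⟩
      by_cases hba : level G b ≤ level G a
      · exact hle b a hba
      · have h3 : level G b ≤ level G i ∧ level G j ≤ level G a := by
          simp only [φ] at h
          grind
        exact ((hle b i h3.1).trans hloop).trans (hle j a h3.2)
  have hN : NinS (insert (i, j) G) i = (NinS G i).erase j := by
    ext x
    simp only [NinS, mem_insert, mem_filter, mem_univ, true_and, mem_erase, Prod.mk.injEq, hE,
      ne_eq]
    grind
  have hP : ∀ k ∈ (NinS G i).erase j, Pset (insert (i, j) G) i k ⊆ insert j (peers G i) := by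
    intro k hk x
    rw [NinS_eq hE] at hk
    simp only [mem_erase, mem_filter, mem_univ, true_and] at hk
    simp only [Pset, peers, mem_insert, mem_filter, mem_univ, true_and, Prod.mk.injEq, hE, ne_eq]
    grind
  have hspos : (1 : ℝ) ≤ ((peers G i).card : ℝ) := by
    have : i ∈ peers G i := by simp [peers]
    exact_mod_cast Finset.card_pos.2 ⟨i, this⟩
  have hcost : ((Lcard G (level G i) : ℝ) - 1) / (((peers G i).card : ℝ) + 1)
      ≤ ∑ k ∈ NinS (insert (i, j) G) i,
        (1 : ℝ) / ((Pset (insert (i, j) G) i k).card : ℝ) := by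
    have hL : (((NinS G i).erase j).card : ℝ) = (Lcard G (level G i) : ℝ) - 1 := by
      rw [← card_NinS hE, ← Finset.card_erase_add_one hjN]
      push_cast
      ring
    rw [hN, ← hL, ← mul_one_div, ← nsmul_eq_mul]
    apply Finset.card_nsmul_le_sum
    intro k hk
    have h1 : 0 < (Pset (insert (i, j) G) i k).card :=
      Finset.card_pos.2 ⟨i, Finset.mem_insert_self _ _⟩
    have h2 : (Pset (insert (i, j) G) i k).card ≤ (peers G i).card + 1 :=
      (Finset.card_le_card (hP k hk)).trans (Finset.card_insert_le _ _)
    apply one_div_le_one_div_of_le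
    · exact_mod_cast h1
    · exact_mod_cast h2
  unfold utility
  rw [cost_eq hE, card_Nout_insert hij]
  generalize (Lcard G (level G i) : ℝ) = L at *
  generalize ((peers G i).card : ℝ) = s at *
  have h1 := hH.monotone hlev
  have h2 := mul_le_mul_of_nonneg_left hcost hc.le
  have h3 : (s + L) / (s * (s + 1)) = L / s - (L - 1) / (s + 1) := by
    have : s ≠ 0 := by linarith
    have : s + 1 ≠ 0 := by linarith
    field_simp
    ring
  rw [h3, mul_sub] at hAi
  linarith

/-! ### Equilibrium -/

/-- a sequential hierarchy with complete SCCs satisfying (A) and (B) is a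
non-consensual equilibrium network. -/
theorem stmt4 {n : ℕ} (hn : 3 ≤ n) (G : Network n) (hG : validNetwork G)
    (hsh : seqHierarchy G) (hcomp : completeSCCs G)
    (γ c : ℝ) (H : ℕ → ℝ) (hpar : UtilityParams γ c H)
    (hA : ∀ i : Fin n, 1 ≤ level G i →
      γ + c * ((((Pall G i).card : ℝ) + (Lcard G (level G i) : ℝ)) /
          (((Pall G i).card : ℝ) * (((Pall G i).card : ℝ) + 1)))
        < H (level G i) - H (level G i - 1))
    (hB : ∀ i j : Fin n, criticalEdge G i j →
      H (level G i + 1) - H (level G i)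
        < γ + c * (1 + (Lcard G (level G i) : ℝ) / 2)) :
    eqNonConsensual γ c H G := by
  have hE := mem_iff_level_le hG hsh hcomp
  intro i j hne
  refine ⟨fun hij => ?_, fun hij => ?_⟩
  · rcases ((hE i j).1 hij).2.lt_or_eq with h | h
    · exact erase_up_lt hE hpar h
    · exact erase_same_lt hE hpar hB hne h
  · refine insert_down_lt hE hpar hA ?_
    by_contra! h
    exact hij ((hE i j).2 ⟨hne, h⟩)


end
end

section
/- Let G be a digraph on N and (γ,H,c) utility parameters such that G is an equilibrium network for consensual agents with parameters (γ,H,c). Then G contains no directed cycles (so every weakly connected component of G is a hierarchical structure), and moreover: (C1) for all i,j ∈ N with ji ∈ G and ij ∉ G, writing ℓ = ℓ_i(C(G)) and ℓ' = ℓ_j(C(G)), H(ℓ) − H(ℓ') > γ + c·Σ_{p ∈ N_in^s(i,G)∖{j}} (|P_i(G+ij,p)| − |P_i(G,p)|)/(|P_i(G,p)|·|P_i(G+ij,p)|) + c/|P_i(G,j)|; (C2) for all distinct i,j ∈ N with ℓ_j(C(G)) ≤ ℓ_i(C(G)) such that G contains no path from j to i and no path from i to j, H(ℓ_i(C(G))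 + 1) − H(ℓ_j(C(G))) < c; (C3) for every critical edge ij, ji ∈ G with ℓ := ℓ_i(C(G)) and ℓ_i(C(G − ij)) = ℓ + 1, H(ℓ+1) − H(ℓ) < γ + c·Σ_{p ∈ N_in^s(i,G)} (|P_i(G,p)| − |P_i(G−ij,p)|)/(|P_i(G,p)|·|P_i(G−ij,p)|) + c. -/
/-!
The level of a node is the maximal length of *any* chain of condensation arcs ending in its SCC
(`chain_le_level`, `chain_level`): a longest chain automatically starts at a source.
Consequently, adding an edge `ij` does not lower the level of `x`
unless `j` reaches `x` but not conversely (`level_le_level_insert`); the only chains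
destroyed are those running through a cycle closed by `ij`.

* (C1): if `ji` is a single edge, adding `ij` does not hurt `j`, so it must strictly hurt `i`.
  In the new network `i` and `j` share a level, which is at least the old level of `j`.
  The gain of `i` in out-degree and cost is explicit, so the bound on `H` follows.
* No directed cycles: a single edge inside an SCC would contradict (C1), since levels are constant
  on SCCs and the lower bound in (C1) is positive.
* (C2): if `i` and `j` are not related by paths, adding `ij` strictly benefits `i`, hence must
  strictly hurt `j`. The new level of `j` is at least `ℓ_i + 1` and the extra cost is at most `c`.
* (C3): compare the utility of `i` before and after removing `ij`; `j` becomes a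
  subordinate of `i` whose cost is at most `c`.
-/

open Finset MeasureTheory ProbabilityTheory

attribute [local instance 10] Classical.propDecidable

noncomputable section

variable {n : ℕ}

/-! ### Chains in the condensation -/

/-- There is a path of `m` arcs in the condensation ending in the SCC of `i`; unlike in the
definition of `level`, its start need not be a source. -/
def HasChain (G : Network n) (m : ℕ) (i : Fin n) : Prop :=
  ∃ f : ℕ → Fin n, sameSCC G (f m) i ∧ ∀ t, t < m → condArc G (f t) (f (t + 1))

theorem sameSCC_refl (G : Network n) (i : Fin n) : sameSCC G i i :=
  ⟨Relation.ReflTransGen.refl, Relation.ReflTransGen.refl⟩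

theorem sameSCC.symm {G : Network n} {i j : Fin n} (h : sameSCC G i j) : sameSCC G j i :=
  ⟨h.2, h.1⟩

theorem sameSCC.trans {G : Network n} {i j k : Fin n} (h : sameSCC G i j) (h' : sameSCC G j k) :
    sameSCC G i k :=
  ⟨Relation.ReflTransGen.trans h.1 h'.1, Relation.ReflTransGen.trans h'.2 h.2⟩

theorem reach_mono {G G' : Network n} (h : G ⊆ G') {i j : Fin n} (hr : reach G i j) :
    reach G' i j :=
  Relation.ReflTransGen.mono (fun _ _ hab => h hab) _ _ hr

theorem condArc.reach {G : Network n} {a b : Fin n} (h : condArc G a b) : reach G a b := by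
  obtain ⟨-, a', b', ha, hb, he⟩ := h
  exact Relation.ReflTransGen.trans (Relation.ReflTransGen.tail ha.1 he) hb.2

theorem chain_reach {G : Network n} {m : ℕ} {f : ℕ → Fin n}
    (hf : ∀ t, t < m → condArc G (f t) (f (t + 1))) {s t : ℕ} (hst : s ≤ t) (ht : t ≤ m) :
    reach G (f s) (f t) := by
  induction t, hst using Nat.le_induction with
  | base => exact Relation.ReflTransGen.refl
  | succ t hst ih =>
    exact Relation.ReflTransGen.trans (ih (by omega)) (hf t (by omega)).reach

/-- The condensation is acyclic, so a chain visits pairwise different nodes. -/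
theorem HasChain.lt {G : Network n} {m : ℕ} {i : Fin n} (h : HasChain G m i) : m < n := by
  obtain ⟨f, -, hf⟩ := h
  have key : ∀ s t, s < t → t ≤ m → f s ≠ f t := by
    intro s t hst ht he
    have h1 := hf s (by omega)
    apply h1.1
    refine ⟨h1.reach, ?_⟩
    rw [he]
    exact chain_reach hf hst ht
  have hinj : Function.Injective (fun t : Fin (m + 1) => f t) := by
    intro s t hst
    rcases lt_trichotomy s t with h | h | h
    · exact absurd hst (key s t h (by omega))
    · exact h
    · exact absurd hst.symm (key t s h (by omega))
  have := Fintype.card_le_of_injective _ hinj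
  simp at this
  omega

theorem hasChain_zero (G : Network n) (i : Fin n) : HasChain G 0 i :=
  ⟨fun _ => i, sameSCC_refl G i, by simp⟩

theorem HasChain.snoc {G : Network n} {m : ℕ} {i j : Fin n} (h : HasChain G m i)
    (ha : condArc G i j) : HasChain G (m + 1) j := by
  obtain ⟨f, hi, hf⟩ := h
  refine ⟨fun t => if t ≤ m then f t else j, by simpa using sameSCC_refl G j, fun t ht => ?_⟩
  by_cases htm : t = m
  · subst htm
    obtain ⟨hn, a', b', h1, h2, h3⟩ := ha
    simpa using ⟨fun hc => hn (hi.symm.trans hc), a', b', hi.trans h1, h2, h3⟩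
  · have h1 : t ≤ m := by omega
    have h2 : t + 1 ≤ m := by omega
    simpa [h1, h2] using hf t (by omega)

theorem HasChain.congr {G : Network n} {m : ℕ} {i j : Fin n} (h : HasChain G m i)
    (hij : sameSCC G i j) : HasChain G m j := by
  obtain ⟨f, hi, hf⟩ := h
  exact ⟨f, hi.trans hij, hf⟩

/-- A chain of maximal length starts at a source, so the level of `i` is the largest element of
the set of lengths of chains ending at `i`. -/
theorem level_spec (G : Network n) (i : Fin n) :
    HasChain G (level G i) i ∧ ∀ m, HasChain G m i → m ≤ level G i := by
  have hb : BddAbove {m : ℕ | ∃ f : ℕ → Fin n, isSourceSCC G (f 0) ∧ sameSCC G (f m) i ∧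
      ∀ t, t < m → condArc G (f t) (f (t + 1))} :=
    ⟨n, fun m ⟨f, _, h⟩ => (HasChain.lt ⟨f, h⟩).le⟩
  obtain ⟨M, hM, hmax⟩ : ∃ M, HasChain G M i ∧ ∀ m, HasChain G m i → m ≤ M := by
    have hbd : BddAbove {m | HasChain G m i} := ⟨n, fun m h => h.lt.le⟩
    exact ⟨sSup {m | HasChain G m i}, Nat.sSup_mem ⟨0, hasChain_zero G i⟩ hbd,
      fun m h => le_csSup hbd h⟩
  obtain ⟨f, hi, hf⟩ := hM
  have hsrc : isSourceSCC G (f 0) := by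
    intro b hbarc
    have : HasChain G (M + 1) i := by
      refine ⟨fun t => Nat.casesOn t b f, hi, fun t ht => ?_⟩
      cases t with
      | zero => exact hbarc
      | succ t => exact hf t (by omega)
    have := hmax _ this
    omega
  have hmem := Nat.sSup_mem (by exact ⟨M, f, hsrc, hi, hf⟩) hb
  have hle : M ≤ level G i := le_csSup hb ⟨f, hsrc, hi, hf⟩
  obtain ⟨g, -, hg⟩ := hmem
  exact ⟨⟨g, hg⟩, fun m h => (hmax m h).trans hle⟩

theorem chain_level (G : Network n) (i : Fin n) : HasChain G (level G i) i := (level_spec G i).1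

theorem chain_le_level {G : Network n} {m : ℕ} {i : Fin n} (h : HasChain G m i) :
    m ≤ level G i := (level_spec G i).2 m h

theorem level_congr {G : Network n} {i j : Fin n} (h : sameSCC G i j) : level G i = level G j :=
  le_antisymm (chain_le_level ((chain_level G i).congr h))
    (chain_le_level ((chain_level G j).congr h.symm))

/-! ### Adding an edge -/

theorem reach_insert {G : Network n} {i j a b : Fin n} (h : reach (insert (i, j) G) a b) :
    reach G a b ∨ reach G a i ∧ reach G j b := by
  induction h with
  | refl => exact Or.inl Relation.ReflTransGen.refl
  | @tail b d _ hbd ih =>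
    rcases Finset.mem_insert.1 hbd with he | he
    · obtain ⟨rfl, rfl⟩ := Prod.mk.inj he
      rcases ih with ih | ih
      · exact Or.inr ⟨ih, Relation.ReflTransGen.refl⟩
      · exact Or.inr ⟨ih.1, Relation.ReflTransGen.refl⟩
    · rcases ih with ih | ih
      · exact Or.inl (Relation.ReflTransGen.tail ih he)
      · exact Or.inr ⟨ih.1, Relation.ReflTransGen.tail ih.2 he⟩

/-- A condensation arc `a → b` above `x` collapses in `G + ij` only if `j` reaches `a`; then
`j` reaches `x`, so by hypothesis `x` reaches `j` and `a → b` was already on a cycle. -/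
theorem level_le_level_insert {G : Network n} {i j x : Fin n}
    (hx : reach G j x → reach G x j) : level G x ≤ level (insert (i, j) G) x := by
  have hsub : G ⊆ insert (i, j) G := Finset.subset_insert _ _
  have hscc : ∀ {a b}, sameSCC G a b → sameSCC (insert (i, j) G) a b :=
    fun h => ⟨reach_mono hsub h.1, reach_mono hsub h.2⟩
  obtain ⟨f, hfx, hf⟩ := chain_level G x
  refine chain_le_level ⟨f, hscc hfx, fun t ht => ?_⟩
  have harc := hf t ht
  have hbx : reach G (f (t + 1)) x :=
    Relation.ReflTransGen.trans (chain_reach hf (show t + 1 ≤ level G x from ht) le_rfl) hfx.1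
  have hab := harc.reach
  obtain ⟨hn, a', b', h1, h2, h3⟩ := harc
  refine ⟨fun hc => hn ⟨hab, ?_⟩, a', b', hscc h1, hscc h2, hsub h3⟩
  rcases reach_insert hc.2 with h | ⟨-, h⟩
  · exact h
  · have hjx : reach G j x := Relation.ReflTransGen.trans h (Relation.ReflTransGen.trans hab hbx)
    exact Relation.ReflTransGen.trans hbx (Relation.ReflTransGen.trans (hx hjx) h)

/-! ### Costs -/

theorem Pset_mono {G G' : Network n} (h : G ⊆ G') (i k : Fin n) : Pset G i k ⊆ Pset G' i k := by
  intro x hx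
  simp only [Pset, Finset.mem_insert, Finset.mem_filter, Finset.mem_univ, true_and] at hx ⊢
  exact hx.imp_right fun hx => ⟨h hx.1, h hx.2.1, h hx.2.2⟩

theorem one_le_card_Pset (G : Network n) (i k : Fin n) : (1 : ℝ) ≤ ((Pset G i k).card : ℝ) := by
  exact_mod_cast Finset.card_pos.2 ⟨i, Finset.mem_insert_self _ _⟩

theorem card_Pset_mono {G G' : Network n} (h : G ⊆ G') (i k : Fin n) :
    ((Pset G i k).card : ℝ) ≤ ((Pset G' i k).card : ℝ) := by
  exact_mod_cast Finset.card_le_card (Pset_mono h i k)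

theorem one_div_card_Pset_anti {G G' : Network n} (h : G ⊆ G') (i k : Fin n) :
    1 / ((Pset G' i k).card : ℝ) ≤ 1 / ((Pset G i k).card : ℝ) :=
  one_div_le_one_div_of_le (by linarith [one_le_card_Pset G i k]) (card_Pset_mono h i k)

theorem one_div_card_Pset_le_one (G : Network n) (i k : Fin n) :
    1 / ((Pset G i k).card : ℝ) ≤ 1 := by
  have := one_le_card_Pset G i k
  rw [div_le_one (by linarith)]
  exact this

/-- The summand of (C1) and (C3) is a difference of two cost terms. -/
theorem cost_diff (G G' : Network n) (i p : Fin n) :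
    (((Pset G' i p).card : ℝ) - ((Pset G i p).card : ℝ)) /
      (((Pset G i p).card : ℝ) * ((Pset G' i p).card : ℝ)) =
    1 / ((Pset G i p).card : ℝ) - 1 / ((Pset G' i p).card : ℝ) := by
  have h1 := one_le_card_Pset G i p
  have h2 := one_le_card_Pset G' i p
  field_simp

theorem sum_cost_anti {G G' : Network n} (h : G ⊆ G') (i : Fin n) (S : Finset (Fin n)) :
    ∑ k ∈ S, 1 / ((Pset G' i k).card : ℝ) ≤ ∑ k ∈ S, 1 / ((Pset G i k).card : ℝ) :=
  Finset.sum_le_sum fun k _ => one_div_card_Pset_anti h i k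

theorem Nout_insert_self {G : Network n} {i j : Fin n} (h : (i, j) ∉ G) :
    ((Nout (insert (i, j) G) i).card : ℝ) = (Nout G i).card + 1 := by
  have : Nout (insert (i, j) G) i = insert j (Nout G i) := by
    ext x; simp [Nout]
  rw [this, Finset.card_insert_of_notMem (by simpa [Nout] using h)]
  push_cast; rfl

theorem Nout_insert_of_ne {G : Network n} {i j : Fin n} (h : i ≠ j) :
    Nout (insert (i, j) G) j = Nout G j := by
  ext x; simp [Nout, h.symm]

/-! ### The equilibrium conditions -/

/-- (C1), with the sum written as a difference of costs. -/
theorem single_edge_gap {G : Network n} (hG : validNetwork G) {γ c : ℝ} {H : ℕ → ℝ}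
    (hpar : UtilityParams γ c H) (heq : eqConsensual γ c H G) {i j : Fin n}
    (hji : (j, i) ∈ G) (hij : (i, j) ∉ G) :
    γ + c * (∑ p ∈ (NinS G i).erase j, (1 / ((Pset G i p).card : ℝ)
        - 1 / ((Pset (insert (i, j) G) i p).card : ℝ))) + c / ((Pset G i j).card : ℝ)
      < H (level G i) - H (level G j) := by
  obtain ⟨hγ, hc, hH, -⟩ := hpar
  have hne : i ≠ j := fun h => hG _ hji h.symm
  have hsub : G ⊆ insert (i, j) G := Finset.subset_insert _ _
  have hlevj : level G j ≤ level (insert (i, j) G) j := level_le_level_insert fun h => h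
  have hlev : level (insert (i, j) G) i = level (insert (i, j) G) j :=
    level_congr ⟨Relation.ReflTransGen.single (Finset.mem_insert_self _ _),
      Relation.ReflTransGen.single (hsub hji)⟩
  have hNj : NinS (insert (i, j) G) j = NinS G j := by
    ext x
    simp only [NinS, Finset.mem_filter, Finset.mem_univ, true_and, Finset.mem_insert,
      Prod.mk.injEq]
    grind
  have hNi : NinS (insert (i, j) G) i = (NinS G i).erase j := by
    ext x
    simp only [NinS, Finset.mem_filter, Finset.mem_univ, true_and, Finset.mem_insert,
      Prod.mk.injEq, Finset.mem_erase]
    grind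
  have huj : utility γ c H G j ≤ utility γ c H (insert (i, j) G) j := by
    unfold utility
    rw [hNj, Nout_insert_of_ne hne]
    have h1 := hH.monotone hlevj
    have h2 := mul_le_mul_of_nonneg_left (sum_cost_anti hsub j (NinS G j)) hc.le
    linarith
  have hui : utility γ c H (insert (i, j) G) i < utility γ c H G i := by
    rcases (heq i j hne).2 hij with h | h
    · exact h
    · exact absurd h.2 (not_lt.2 huj)
  unfold utility at hui
  have hmem : j ∈ NinS G i := by simp [NinS, hji, hij]
  rw [hNi, Nout_insert_self hij, hlev, ← Finset.add_sum_erase _ _ hmem] at hui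
  have h1 := hH.monotone hlevj
  rw [Finset.sum_sub_distrib, div_eq_mul_one_div c]
  linarith

/-- (C2). -/
theorem unrelated_gap {G : Network n} {γ c : ℝ} {H : ℕ → ℝ}
    (hpar : UtilityParams γ c H) (heq : eqConsensual γ c H G) {i j : Fin n}
    (hne : i ≠ j) (hnji : ¬ reach G j i) (hnij : ¬ reach G i j) :
    H (level G i + 1) - H (level G j) < c := by
  obtain ⟨hγ, hc, hH, -⟩ := hpar
  have hij : (i, j) ∉ G := fun h => hnij (Relation.ReflTransGen.single h)
  have hji : (j, i) ∉ G := fun h => hnji (Relation.ReflTransGen.single h)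
  have hsub : G ⊆ insert (i, j) G := Finset.subset_insert _ _
  have hlevi : level G i ≤ level (insert (i, j) G) i :=
    level_le_level_insert fun h => absurd h hnji
  have harc : condArc (insert (i, j) G) i j := by
    refine ⟨fun hs => ?_, i, j, sameSCC_refl _ _, sameSCC_refl _ _, Finset.mem_insert_self _ _⟩
    rcases reach_insert hs.2 with h | h
    · exact hnji h
    · exact hnji h.1
  have hlevj : level G i + 1 ≤ level (insert (i, j) G) j :=
    (Nat.succ_le_succ hlevi).trans (chain_le_level ((chain_level _ i).snoc harc))
  have hNi : NinS (insert (i, j) G) i = NinS G i := by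
    ext x
    simp only [NinS, Finset.mem_filter, Finset.mem_univ, true_and, Finset.mem_insert,
      Prod.mk.injEq]
    grind
  have hNj : NinS (insert (i, j) G) j = insert i (NinS G j) := by
    ext x
    simp only [NinS, Finset.mem_filter, Finset.mem_univ, true_and, Finset.mem_insert,
      Prod.mk.injEq]
    grind
  have hui : utility γ c H G i < utility γ c H (insert (i, j) G) i := by
    unfold utility
    rw [hNi, Nout_insert_self hij]
    have h1 := hH.monotone hlevi
    have h2 := mul_le_mul_of_nonneg_left (sum_cost_anti hsub i (NinS G i)) hc.le
    linarith
  have huj : utility γ c H (insert (i, j) G) j < utility γ c H G j := by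
    rcases (heq i j hne).2 hij with h | h
    · exact absurd h (not_lt.2 hui.le)
    · exact h.2
  unfold utility at huj
  rw [hNj, Nout_insert_of_ne hne, Finset.sum_insert (by simp [NinS, hij])] at huj
  have h1 := hH.monotone hlevj
  have h2 := mul_le_mul_of_nonneg_left (sum_cost_anti hsub j (NinS G j)) hc.le
  have h3 := mul_le_mul_of_nonneg_left (one_div_card_Pset_le_one (insert (i, j) G) j i) hc.le
  linarith

/-- (C3), with the sum written as a difference of costs. -/
theorem undirected_edge_gap {G : Network n} (hG : validNetwork G) {γ c : ℝ} {H : ℕ → ℝ}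
    (hpar : UtilityParams γ c H) (heq : eqConsensual γ c H G) {i j : Fin n}
    (hij : (i, j) ∈ G) (hji : (j, i) ∈ G)
    (hlev : level (G.erase (i, j)) i = level G i + 1) :
    H (level G i + 1) - H (level G i)
      < γ + c * (∑ p ∈ NinS G i, (1 / ((Pset (G.erase (i, j)) i p).card : ℝ)
          - 1 / ((Pset G i p).card : ℝ))) + c := by
  obtain ⟨hγ, hc, hH, -⟩ := hpar
  have hne : i ≠ j := hG _ hij
  have hui := (heq i j hne).1 hij
  have hN : NinS (G.erase (i, j)) i = insert j (NinS G i) := by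
    ext x
    simp only [NinS, Finset.mem_filter, Finset.mem_univ, true_and, Finset.mem_insert,
      Prod.mk.injEq, Finset.mem_erase, ne_eq]
    grind
  have hout : ((Nout G i).card : ℝ) = (Nout (G.erase (i, j)) i).card + 1 := by
    rw [← Nout_insert_self (Finset.notMem_erase (i, j) G), Finset.insert_erase hij]
  unfold utility at hui
  rw [hN, hout, hlev, Finset.sum_insert (by simp [NinS, hij])] at hui
  have h3 := mul_le_mul_of_nonneg_left (one_div_card_Pset_le_one (G.erase (i, j)) i j) hc.le
  rw [Finset.sum_sub_distrib]
  linarith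

/-- a consensual equilibrium network has no directed cycles and satisfies
conditions (C1), (C2), (C3). -/
theorem stmt6 {n : ℕ} (hn : 3 ≤ n) (G : Network n) (hG : validNetwork G)
    (γ c : ℝ) (H : ℕ → ℝ) (hpar : UtilityParams γ c H)
    (heq : eqConsensual γ c H G) :
    noDirectedCycles G ∧
    (∀ i j : Fin n, (j, i) ∈ G → (i, j) ∉ G →
      γ + c * (∑ p ∈ (NinS G i).erase j,
            (((Pset (insert (i, j) G) i p).card : ℝ) - ((Pset G i p).card : ℝ)) /
              (((Pset G i p).card : ℝ) * ((Pset (insert (i, j) G) i p).card : ℝ)))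
        + c / ((Pset G i j).card : ℝ)
        < H (level G i) - H (level G j)) ∧
    (∀ i j : Fin n, i ≠ j → level G j ≤ level G i →
      ¬ reach G j i → ¬ reach G i j →
      H (level G i + 1) - H (level G j) < c) ∧
    (∀ i j : Fin n, criticalEdge G i j → level (G.erase (i, j)) i = level G i + 1 →
      H (level G i + 1) - H (level G i)
        < γ + c * (∑ p ∈ NinS G i,
              (((Pset G i p).card : ℝ) - ((Pset (G.erase (i, j)) i p).card : ℝ)) /
                (((Pset G i p).card : ℝ) * ((Pset (G.erase (i, j)) i p).card : ℝ)))
          + c) := by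
  have C1 := fun i j => single_edge_gap (i := i) (j := j) hG hpar heq
  refine ⟨fun i j hij hs => ?_, fun i j hji hij => ?_, fun i j hne _ h1 h2 => ?_,
    fun i j hcr hlev => ?_⟩
  · by_contra hji
    have h := C1 j i hij hji
    rw [level_congr hs] at h
    have h1 : 0 ≤ ∑ p ∈ (NinS G j).erase i, (1 / ((Pset G j p).card : ℝ)
        - 1 / ((Pset (insert (j, i) G) j p).card : ℝ)) :=
      Finset.sum_nonneg fun p _ =>
        sub_nonneg.2 (one_div_card_Pset_anti (Finset.subset_insert _ _) j p)
    have h2 := mul_nonneg hpar.2.1.le h1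
    have h3 : 0 ≤ c / ((Pset G j i).card : ℝ) := div_nonneg hpar.2.1.le (Nat.cast_nonneg _)
    linarith [hpar.1]
  · simp only [cost_diff G (insert (i, j) G)]
    exact C1 i j hji hij
  · exact unrelated_gap hpar heq hne h1 h2
  · simp only [mul_comm ((Pset G i _).card : ℝ), cost_diff (G.erase (i, j)) G]
    exact undirected_edge_gap hG hpar heq hcr.1 hcr.2.1 hlev

end
end
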